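/- Let μ be a finite complex Borel measure on [0,1) with t·|μ|([0,1−t)) bounded as t → 0⁺, and suppose the derivation D_μ f = (Xf)*μ on L¹[0,1) is weakly compact. Then μ is absolutely continuous with respect to Lebesgue measure and t·|μ|([0,1−t)) → 0 as t → 0⁺. -/

import Mathlib

open MeasureTheory Set Filter Topology

noncomputable section

/-- Integral of a complex-valued function against a complex (Borel) measure,
defined via the Jordan decompositions of the real and imaginary parts. -/
def cInt {X : Type} [MeasurableSpace X] (μ : ComplexMeasure X) (f : X → ℂ) : ℂ :=
  ((∫ x, f x ∂μ.re.toJordanDecomposition.posPart) -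
      ∫ x, f x ∂μ.re.toJordanDecomposition.negPart) +
    Complex.I * ((∫ x, f x ∂μ.im.toJordanDecomposition.posPart) -
      ∫ x, f x ∂μ.im.toJordanDecomposition.negPart)

/-- A (positive) measure playing the role of the total variation `|μ|` of a complex
measure `μ` (it is equivalent to the classical total variation: `|μ| ≤ cTV μ ≤ 2|μ|`). -/
def cTV {X : Type} [MeasurableSpace X] (μ : ComplexMeasure X) : Measure X :=
  μ.re.totalVariation + μ.im.totalVariation

/-- `μ` is concentrated on the set `A`, i.e. `μ` is a measure "on `A`". -/
def ConcOn {X : Type} [MeasurableSpace X] (μ : ComplexMeasure X) (A : Set X) : Prop :=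
  ∀ E : Set X, MeasurableSet E → E ⊆ Aᶜ → μ E = 0

/-- `ρ` is the convolution `(Xν) * μ` of the complex measures `ν, μ` on `[0,1)`,
characterized by `ρ E = ∫∫ 1_E (t+s) t dμ(s) dν(t)` for Borel `E ⊆ [0,1)`. -/
def IsXConv (μ ν ρ : ComplexMeasure ℝ) : Prop :=
  ConcOn ρ (Ico 0 1) ∧
    ∀ E : Set ℝ, MeasurableSet E → E ⊆ Ico (0 : ℝ) 1 →
      ρ E = cInt ν fun t => (t : ℂ) * cInt μ fun s => E.indicator (1 : ℝ → ℂ) (t + s)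

/-- The Volterra algebra `L¹[0,1)` as a Banach space. -/
abbrev Volterra := Lp ℂ 1 (volume.restrict (Ico (0 : ℝ) 1))

/-- `D` is the derivation `D_μ f = (Xf) * μ` on `L¹[0,1)`, characterized weakly:
`∫ φ(t) (D f)(t) dt = ∫ ∫_{[0,1-s)} φ(t+s) t f(t) dt dμ(s)` for all `φ ∈ C₀[0,1)`. -/
def IsDmu (μ : ComplexMeasure ℝ) (D : Volterra →L[ℂ] Volterra) : Prop :=
  ∀ f : Volterra, ∀ φ : ℝ → ℂ, ContinuousOn φ (Icc 0 1) → φ 1 = 0 →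
    (∫ t, φ t * (D f : ℝ → ℂ) t ∂(volume.restrict (Ico (0 : ℝ) 1))) =
      cInt μ fun s =>
        ∫ t, φ (t + s) * ((t : ℂ) * (f : ℝ → ℂ) t)
          ∂(volume.restrict (Ico (0 : ℝ) (1 - s)))

/-!
Since `D` is weakly compact, the images under `D` of the approximate point masses
`δ⁻¹ 1_{(a, a + δ]}` have a weak cluster point `g` in `L¹[0,1)` as `δ → 0⁺`. Testing against
continuous functions that vanish on `[1, ∞)` identifies `g` with `a` times the translate of `μ`
by `a` on `[0, 1)`, so this translate is absolutely continuous on `[0, 1)`, i.e. `μ` is absolutely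
continuous on `[0, 1 - a)`. Letting `a` be arbitrarily small and using inner regularity gives the
first claim; the second holds because `|μ|` is finite.
-/

section ComplexMeasure

variable {X : Type} [MeasurableSpace X] {μ : ComplexMeasure X}

instance isFiniteMeasure_cTV : IsFiniteMeasure (cTV μ) :=
  inferInstanceAs (IsFiniteMeasure (μ.re.totalVariation + μ.im.totalVariation))

lemma enorm_apply_le_cTV (E : Set X) : ‖μ E‖ₑ ≤ cTV μ E :=
  calc ‖μ E‖ₑ ≤ ‖(μ E).re‖ₑ + ‖(μ E).im‖ₑ := by
        simp only [← ofReal_norm, ← ENNReal.ofReal_add (norm_nonneg _) (norm_nonneg _)]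
        exact ENNReal.ofReal_le_ofReal (Complex.norm_le_abs_re_add_abs_im _)
    _ ≤ μ.re.totalVariation E + μ.im.totalVariation E :=
        add_le_add (μ.re.enorm_le_totalVariation E) (μ.im.enorm_le_totalVariation E)

lemma cTV_apply_eq_zero {E : Set X} (hE : MeasurableSet E) :
    cTV μ E = 0 ↔ ∀ F ⊆ E, MeasurableSet F → μ F = 0 := by
  simp only [cTV, Measure.add_apply, add_eq_zero, SignedMeasure.totalVariation_eq_variation,
    VectorMeasure.variation_apply_eq_zero hE, ← forall_and, Complex.ext_iff]
  rfl

lemma ConcOn.ae_mem {A : Set X} (hμ : ConcOn μ A) (hA : MeasurableSet A) :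
    ∀ᵐ x ∂cTV μ, x ∈ A :=
  (cTV_apply_eq_zero hA.compl).2 fun F hFA hF => hμ F hF hFA

lemma ConcOn.apply_inter {A E : Set X} (hμ : ConcOn μ A) (hA : MeasurableSet A)
    (hE : MeasurableSet E) : μ (E ∩ A) = μ E := by
  rw [← VectorMeasure.of_add_of_sdiff (hE.inter hA) hE inter_subset_left, sdiff_self_inter,
    hμ _ (hE.diff hA) fun _ hx => hx.2, add_zero]

lemma cInt_congr_ae {f g : X → ℂ} (hfg : f =ᵐ[cTV μ] g) : cInt μ f = cInt μ g := by
  simp only [EventuallyEq, cTV, SignedMeasure.totalVariation, ae_add_measure_iff] at hfg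
  obtain ⟨⟨hrep, hren⟩, himp, himn⟩ := hfg
  rw [cInt, cInt, integral_congr_ae hrep, integral_congr_ae hren, integral_congr_ae himp,
    integral_congr_ae himn]

lemma cInt_const_mul (c : ℂ) (f : X → ℂ) : cInt μ (fun x => c * f x) = c * cInt μ f := by
  simp only [cInt, integral_const_mul]
  ring

lemma cInt_indicator_one {E : Set X} (hE : MeasurableSet E) : cInt μ (E.indicator 1) = μ E := by
  have hre : (μ E).re = _ := μ.re.apply_eq_posPart_real_sub_negPart_real hE
  have him : (μ E).im = _ := μ.im.apply_eq_posPart_real_sub_negPart_real hE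
  simp only [cInt, integral_indicator hE, Pi.one_apply, integral_const,
    measureReal_restrict_apply_univ]
  apply Complex.ext <;> simp [hre, him]

lemma tendsto_cInt_of_dominated_convergence {ι : Type*} {l : Filter ι} [l.IsCountablyGenerated]
    {F : ι → X → ℂ} {f : X → ℂ} (bound : X → ℝ)
    (hF_meas : ∀ᶠ i in l, AEStronglyMeasurable (F i) (cTV μ))
    (h_bound : ∀ᶠ i in l, ∀ᵐ x ∂cTV μ, ‖F i x‖ ≤ bound x)
    (bound_integrable : Integrable bound (cTV μ))
    (h_lim : ∀ᵐ x ∂cTV μ, Tendsto (fun i => F i x) l (𝓝 (f x))) :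
    Tendsto (fun i => cInt μ (F i)) l (𝓝 (cInt μ f)) := by
  have tendsto_part (m : Measure X) (hm : m ≤ cTV μ) :
      Tendsto (fun i => ∫ x, F i x ∂m) l (𝓝 (∫ x, f x ∂m)) :=
    tendsto_integral_filter_of_dominated_convergence bound
      (hF_meas.mono fun _ h => h.mono_measure hm) (h_bound.mono fun _ h => ae_mono hm h)
      (bound_integrable.mono_measure hm) (ae_mono hm h_lim)
  have re_le : μ.re.totalVariation ≤ cTV μ := Measure.le_add_right le_rfl
  have im_le : μ.im.totalVariation ≤ cTV μ := Measure.le_add_left le_rfl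
  exact ((tendsto_part _ ((Measure.le_add_right le_rfl).trans re_le)).sub
    (tendsto_part _ ((Measure.le_add_left le_rfl).trans re_le))).add
    (((tendsto_part _ ((Measure.le_add_right le_rfl).trans im_le)).sub
      (tendsto_part _ ((Measure.le_add_left le_rfl).trans im_le))).const_mul _)

end ComplexMeasure

section Regularity

lemma vectorMeasure_apply_eq_zero_of_forall_isCompact {X V : Type*} [MeasurableSpace X]
    [TopologicalSpace X] [OpensMeasurableSpace X] [T2Space X] [NormedAddCommGroup V]
    {v : VectorMeasure X V} {m : Measure X} [IsFiniteMeasure m] [m.InnerRegularCompactLTTop]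
    (hvm : ∀ F, ‖v F‖ₑ ≤ m F) {E : Set X} (hE : MeasurableSet E)
    (hK : ∀ K ⊆ E, IsCompact K → v K = 0) : v E = 0 := by
  refine enorm_eq_zero.1 (le_antisymm (le_of_forall_gt fun ε hε => ?_) bot_le)
  obtain ⟨K, hKE, hKc, hKε⟩ := hE.exists_isCompact_sdiff_lt (measure_ne_top m E) hε.ne'
  calc ‖v E‖ₑ = ‖v (E \ K)‖ₑ := by
        rw [← VectorMeasure.of_add_of_sdiff hKc.measurableSet hE hKE, hK K hKE hKc, zero_add]
    _ ≤ m (E \ K) := hvm _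
    _ < ε := hKε

lemma exists_boundedContinuousFunction_tendsto_indicator {X : Type*} [TopologicalSpace X]
    [NormalSpace X] [HasOuterApproxClosed X] {K U : Set X} (hK : IsClosed K) (hU : IsOpen U)
    (hKU : K ⊆ U) :
    ∃ φ : ℕ → BoundedContinuousFunction X ℂ, (∀ n x, ‖φ n x‖ ≤ 1) ∧ (∀ n, EqOn (φ n) 0 Uᶜ) ∧
      ∀ x, Tendsto (fun n => φ n x) atTop (𝓝 (K.indicator 1 x)) := by
  obtain ⟨f, hfU, hfK, hf⟩ := exists_continuous_zero_one_of_isClosed hU.isClosed_compl hK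
    (disjoint_compl_left_iff_subset.2 hKU)
  have norm_le (n : ℕ) (x : X) : ‖((hK.apprSeq n x : ℝ) * f x : ℂ)‖ ≤ 1 := by
    rw [norm_mul, Complex.norm_real, Complex.norm_real, NNReal.norm_eq,
      Real.norm_of_nonneg (hf x).1]
    exact mul_le_one₀ (HasOuterApproxClosed.apprSeq_apply_le_one hK n x) (hf x).1 (hf x).2
  refine ⟨fun n => .ofNormedAddCommGroup (fun x => (hK.apprSeq n x : ℝ) * f x) (by fun_prop) 1
    (norm_le n), norm_le, fun n x hx => by simp [hfU hx], fun x => ?_⟩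
  have tendsto_appr : Tendsto (fun n => ((hK.apprSeq n x : ℝ) : ℂ)) atTop
      (𝓝 ((K.indicator (fun _ => 1) x : NNReal) : ℝ)) :=
    ((Complex.continuous_ofReal.comp NNReal.continuous_coe).tendsto _).comp
      (tendsto_pi_nhds.1 (HasOuterApproxClosed.tendsto_apprSeq hK) x)
  have indicator_eq : K.indicator (1 : X → ℂ) x =
      ((K.indicator (fun _ => 1) x : NNReal) : ℝ) * f x := by
    by_cases hx : x ∈ K
    · simp [hx, hfK hx]
    · simp [hx]
  rw [indicator_eq]
  exact tendsto_appr.mul_const _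

lemma apply_eq_zero_of_cInt_eq_integral {X : Type} {Y : Type*} [MeasurableSpace X]
    [TopologicalSpace X] [NormalSpace X] [HasOuterApproxClosed X] [OpensMeasurableSpace X]
    [MeasurableSpace Y] {μ : ComplexMeasure X} {ν : Measure Y} {π : Y → X} (hπ : Measurable π)
    {g : Y → ℂ} (hg : Integrable g ν) {K U : Set X} (hK : IsClosed K) (hU : IsOpen U)
    (hKU : K ⊆ U) (hνK : ν (π ⁻¹' K) = 0)
    (hμ : ∀ φ : BoundedContinuousFunction X ℂ, EqOn φ 0 Uᶜ →
      cInt μ φ = ∫ y, φ (π y) * g y ∂ν) :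
    μ K = 0 := by
  obtain ⟨φ, hφ_le, hφU, hφ_lim⟩ := exists_boundedContinuousFunction_tendsto_indicator hK hU hKU
  have tendsto_apply : Tendsto (fun n => cInt μ (φ n)) atTop (𝓝 (μ K)) := by
    rw [← cInt_indicator_one hK.measurableSet]
    exact tendsto_cInt_of_dominated_convergence 1
      (.of_forall fun n => (φ n).continuous.aestronglyMeasurable)
      (.of_forall fun n => .of_forall (hφ_le n)) (integrable_const 1) (.of_forall hφ_lim)
  have tendsto_zero : Tendsto (fun n => ∫ y, φ n (π y) * g y ∂ν) atTop (𝓝 (∫ _, 0 ∂ν)) := by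
    refine tendsto_integral_of_dominated_convergence (fun y => ‖g y‖)
      (fun n => ((φ n).continuous.measurable.comp hπ).aestronglyMeasurable.mul
        hg.aestronglyMeasurable) hg.norm (fun n => .of_forall fun y => ?_) ?_
    · rw [norm_mul]
      exact mul_le_of_le_one_left (norm_nonneg _) (hφ_le n _)
    · filter_upwards [measure_eq_zero_iff_ae_notMem.1 hνK] with y hy
      simpa [indicator_of_notMem (mt mem_preimage.2 hy)] using (hφ_lim (π y)).mul_const (g y)
  rw [integral_zero] at tendsto_zero
  exact tendsto_nhds_unique tendsto_apply
    (tendsto_zero.congr fun n => (hμ (φ n) (hφU n)).symm)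

end Regularity

section WeakTopology

lemma exists_forall_eq_of_tendsto_of_isCompact_closure_toWeakSpace {𝕜 E ι : Type*} [CommRing 𝕜]
    [TopologicalSpace 𝕜] [IsTopologicalRing 𝕜] [T2Space 𝕜] [AddCommGroup E] [Module 𝕜 E]
    [TopologicalSpace E] {S : Set E} (hS : IsCompact (closure (toWeakSpace 𝕜 E '' S)))
    {l : Filter ι} [l.NeBot] {u : ι → E} (hu : ∀ᶠ i in l, u i ∈ S) :
    ∃ g : E, ∀ (L : E →L[𝕜] 𝕜) (c : 𝕜), Tendsto (fun i => L (u i)) l (𝓝 c) → L g = c := by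
  obtain ⟨g, -, hg⟩ := hS.exists_mapClusterPt (f := l) (u := fun i => toWeakSpace 𝕜 E (u i))
    (le_principal_iff.2 <| hu.mono fun _ hi => subset_closure (mem_image_of_mem _ hi))
  refine ⟨(toWeakSpace 𝕜 E).symm g, fun L c hc => ?_⟩
  have L_continuous : Continuous fun x : WeakSpace 𝕜 E => L ((toWeakSpace 𝕜 E).symm x) :=
    WeakBilin.eval_continuous (topDualPairing 𝕜 E).flip L
  exact eq_of_nhds_neBot ((hg.continuousAt_comp L_continuous.continuousAt).clusterPt.mono hc)

lemma exists_clm_eq_integral_mul {X : Type*} [MeasurableSpace X] {ν : Measure X} {φ : X → ℂ}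
    (hφ : MemLp φ ⊤ ν) :
    ∃ L : Lp ℂ 1 ν →L[ℂ] ℂ, ∀ f : Lp ℂ 1 ν, L f = ∫ x, φ x * f x ∂ν := by
  refine ⟨(ContinuousLinearMap.mul ℂ ℂ).lpPairing ν ⊤ 1 hφ.toLp, fun f => ?_⟩
  rw [ContinuousLinearMap.lpPairing_eq_integral]
  refine integral_congr_ae ?_
  filter_upwards [hφ.coeFn_toLp] with x hx
  rw [hx, ContinuousLinearMap.mul_apply']

end WeakTopology

section PointMass

/-- The approximate point mass `δ⁻¹ 1_{(a, a + δ]}` at `a`, as an element of `L¹[0,1)`. As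
`δ → 0⁺` it converges to the Dirac mass at `a`, so that its image under `D_μ` approximates `a` times
the translate of `μ` by `a`. The part of the interval outside `[0,1)` is discarded. -/
def approxPointMass (a δ : ℝ) : Volterra :=
  indicatorConstLp 1 (s := Ioc a (a + δ)) measurableSet_Ioc (measure_ne_top _ _) (δ⁻¹ : ℂ)

variable {a b δ : ℝ}

lemma norm_approxPointMass_le (hδ : 0 < δ) : ‖approxPointMass a δ‖ ≤ 1 := by
  have measure_le : (volume.restrict (Ico (0 : ℝ) 1)).real (Ioc a (a + δ)) ≤ δ := by
    refine ENNReal.toReal_le_of_le_ofReal hδ.le ((Measure.restrict_apply_le _ _).trans_eq ?_)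
    rw [Real.volume_Ioc, add_sub_cancel_left]
  calc ‖approxPointMass a δ‖ = δ⁻¹ * (volume.restrict (Ico (0 : ℝ) 1)).real (Ioc a (a + δ)) := by
        simp [approxPointMass, norm_indicatorConstLp, abs_of_pos hδ]
    _ ≤ δ⁻¹ * δ := by gcongr
    _ = 1 := inv_mul_cancel₀ hδ.ne'

lemma setIntegral_mul_approxPointMass (ha : 0 ≤ a) (hb : b ≤ 1) (hδ : 0 ≤ δ) {h : ℝ → ℂ}
    (hh : ∀ t, b ≤ t → h t = 0) :
    ∫ t in Ico 0 b, h t * approxPointMass a δ t = δ⁻¹ • ∫ t in a..(a + δ), h t := by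
  have coe_ae : ∀ᵐ t ∂volume.restrict (Ico 0 b),
      approxPointMass a δ t = (Ioc a (a + δ)).indicator (fun _ => (δ⁻¹ : ℂ)) t :=
    ae_mono (Measure.restrict_mono (Ico_subset_Ico_right hb) le_rfl) indicatorConstLp_coeFn
  calc ∫ t in Ico 0 b, h t * approxPointMass a δ t
      = ∫ t in Ico 0 b, (Ioc a (a + δ)).indicator (fun t => δ⁻¹ • h t) t := by
        refine integral_congr_ae (coe_ae.mono fun t ht => ?_)
        by_cases htI : t ∈ Ioc a (a + δ) <;> simp [ht, htI, mul_comm]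
    _ = ∫ t, (Ioc a (a + δ)).indicator (fun t => δ⁻¹ • h t) t := by
        refine setIntegral_eq_integral_of_forall_compl_eq_zero fun t ht => ?_
        by_cases htI : t ∈ Ioc a (a + δ)
        · have b_le : b ≤ t := by
            by_contra! htb
            exact ht ⟨ha.trans htI.1.le, htb⟩
          simp [htI, hh t b_le]
        · simp [htI]
    _ = δ⁻¹ • ∫ t in a..(a + δ), h t := by
        rw [integral_indicator measurableSet_Ioc, integral_smul,
          intervalIntegral.integral_of_le (le_add_of_nonneg_right hδ)]

lemma tendsto_inv_smul_intervalIntegral {E : Type*} [NormedAddCommGroup E] [NormedSpace ℝ E]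
    [CompleteSpace E] {h : ℝ → E} (hh : Continuous h) (a : ℝ) :
    Tendsto (fun δ : ℝ => δ⁻¹ • ∫ t in a..(a + δ), h t) (𝓝[>] 0) (𝓝 (h a)) := by
  simpa using (intervalIntegral.integral_hasDerivAt_right (hh.intervalIntegrable a a)
    (hh.stronglyMeasurableAtFilter _ _) hh.continuousAt).tendsto_slope_zero_right

lemma norm_inv_smul_intervalIntegral_le {E : Type*} [NormedAddCommGroup E] [NormedSpace ℝ E]
    {h : ℝ → E} {C : ℝ} (hδ : 0 < δ) (hC : ∀ t ∈ Ioc a (a + δ), ‖h t‖ ≤ C) :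
    ‖δ⁻¹ • ∫ t in a..(a + δ), h t‖ ≤ C := by
  have integral_le : ‖∫ t in a..(a + δ), h t‖ ≤ C * δ := by
    simpa only [add_sub_cancel_left, abs_of_pos hδ] using
      intervalIntegral.norm_integral_le_of_norm_le_const (a := a) (b := a + δ)
        (uIoc_of_le (le_add_of_nonneg_right hδ.le) ▸ hC)
  rw [norm_smul, norm_inv, Real.norm_of_nonneg hδ.le]
  exact (inv_mul_le_iff₀' hδ).2 integral_le

lemma tendsto_cInt_inv_smul_intervalIntegral {X : Type} [MeasurableSpace X] [TopologicalSpace X]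
    [OpensMeasurableSpace X] {μ : ComplexMeasure X} {h : X → ℝ → ℂ}
    (hh : Continuous (Function.uncurry h)) {C : ℝ}
    (hC : ∀ x, ∀ t ∈ Ioc a (a + 1), ‖h x t‖ ≤ C) :
    Tendsto (fun δ : ℝ => cInt μ fun x => δ⁻¹ • ∫ t in a..(a + δ), h x t) (𝓝[>] 0)
      (𝓝 (cInt μ fun x => h x a)) := by
  refine tendsto_cInt_of_dominated_convergence (fun _ => C) (.of_forall fun δ => ?_) ?_
    (integrable_const C) (.of_forall fun x => tendsto_inv_smul_intervalIntegral
      (hh.comp (Continuous.prodMk_right x)) a)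
  · exact ((intervalIntegral.continuous_parametric_intervalIntegral_of_continuous'
      (μ := volume) hh a (a + δ)).const_smul δ⁻¹).aestronglyMeasurable
  · filter_upwards [Ioc_mem_nhdsGT zero_lt_one] with δ hδ
    exact .of_forall fun x => norm_inv_smul_intervalIntegral_le hδ.1 fun t ht =>
      hC x t ⟨ht.1, ht.2.trans (by gcongr; exact hδ.2)⟩

end PointMass

section Derivation

variable {μ : ComplexMeasure ℝ} {D : Volterra →L[ℂ] Volterra} {a : ℝ}

lemma IsDmu.tendsto_integral_mul_apply_approxPointMass (hD : IsDmu μ D)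
    (hμ : ConcOn μ (Ico 0 1)) (ha : 0 ≤ a) (φ : BoundedContinuousFunction ℝ ℂ)
    (hφ : ∀ x, 1 ≤ x → φ x = 0) :
    Tendsto (fun δ => ∫ t in Ico 0 1, φ t * D (approxPointMass a δ) t) (𝓝[>] 0)
      (𝓝 (a * cInt μ fun s => φ (a + s))) := by
  have norm_le (s t : ℝ) (ht : t ∈ Ioc a (a + 1)) : ‖φ (t + s) * t‖ ≤ ‖φ‖ * (a + 1) := by
    rw [norm_mul, Complex.norm_real, Real.norm_of_nonneg (ha.trans ht.1.le)]
    exact mul_le_mul (φ.norm_coe_le_norm _) ht.2 (ha.trans ht.1.le) (norm_nonneg _)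
  have tendsto_averages := tendsto_cInt_inv_smul_intervalIntegral (μ := μ)
    (h := fun s t => φ (t + s) * t) (by fun_prop) norm_le
  simp only [mul_comm _ (a : ℂ), cInt_const_mul] at tendsto_averages
  refine tendsto_averages.congr' ?_
  filter_upwards [self_mem_nhdsWithin] with δ (hδ : 0 < δ)
  rw [hD _ φ φ.continuous.continuousOn (hφ 1 le_rfl)]
  refine cInt_congr_ae ((hμ.ae_mem measurableSet_Ico).mono fun s hs => ?_)
  simp only [← mul_assoc]
  refine (setIntegral_mul_approxPointMass ha (by linarith [hs.1]) hδ.le fun t ht => ?_).symm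
  rw [hφ (t + s) (by linarith), zero_mul]

lemma IsDmu.exists_cInt_eq_integral_mul (hD : IsDmu μ D) (hμ : ConcOn μ (Ico 0 1))
    (hw : IsCompact (closure (toWeakSpace ℂ Volterra '' (D '' Metric.closedBall 0 1))))
    (ha : 0 < a) :
    ∃ g : Volterra, ∀ φ : BoundedContinuousFunction ℝ ℂ, EqOn φ 0 (Iio (1 - a))ᶜ →
      cInt μ φ = ∫ t in Ico 0 1, φ (t - a) * g t := by
  obtain ⟨g, hg⟩ := exists_forall_eq_of_tendsto_of_isCompact_closure_toWeakSpace hw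
    (l := 𝓝[>] (0 : ℝ)) (u := fun δ => D (approxPointMass a δ)) <| by
      filter_upwards [self_mem_nhdsWithin] with δ hδ
      exact mem_image_of_mem D (mem_closedBall_zero_iff.2 (norm_approxPointMass_le hδ))
  refine ⟨(a⁻¹ : ℂ) • g, fun φ hφ => ?_⟩
  let ψ : BoundedContinuousFunction ℝ ℂ := φ.compContinuous ⟨(· - a), by fun_prop⟩
  have ψ_eq_zero (x : ℝ) (hx : 1 ≤ x) : ψ x = 0 := hφ (by simpa using hx)
  obtain ⟨L, hL⟩ := exists_clm_eq_integral_mul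
    (ψ.memLp_top (μ := volume.restrict (Ico (0 : ℝ) 1)))
  have L_g : L g = a * cInt μ fun s => ψ (a + s) := by
    refine hg L _ ?_
    simpa only [hL] using
      hD.tendsto_integral_mul_apply_approxPointMass hμ ha.le ψ ψ_eq_zero
  calc cInt μ φ = (a⁻¹ : ℂ) * (a * cInt μ fun s => ψ (a + s)) := by
        rw [inv_mul_cancel_left₀ (Complex.ofReal_ne_zero.2 ha.ne')]
        simp [ψ]
    _ = L ((a⁻¹ : ℂ) • g) := by rw [map_smul, L_g, smul_eq_mul]
    _ = ∫ t in Ico 0 1, φ (t - a) * ((a⁻¹ : ℂ) • g : Volterra) t := hL _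

lemma IsDmu.apply_eq_zero_of_isCompact (hD : IsDmu μ D) (hμ : ConcOn μ (Ico 0 1))
    (hw : IsCompact (closure (toWeakSpace ℂ Volterra '' (D '' Metric.closedBall 0 1))))
    {K : Set ℝ} (hK : IsCompact K) (hK1 : K ⊆ Iio 1) (hK0 : volume K = 0) : μ K = 0 := by
  rcases K.eq_empty_or_nonempty with rfl | hne
  · exact VectorMeasure.empty μ
  obtain ⟨m, hmK, hm⟩ := hK.exists_isGreatest hne
  obtain ⟨a, ha0, ham⟩ := exists_between (sub_pos.2 (mem_Iio.1 (hK1 hmK)))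
  obtain ⟨g, hg⟩ := hD.exists_cInt_eq_integral_mul hμ hw ha0
  refine apply_eq_zero_of_cInt_eq_integral (measurable_sub_const a) (L1.integrable_coeFn g)
    hK.isClosed isOpen_Iio (fun x hx => ?_) ?_ hg
  · exact (hm hx).trans_lt (lt_sub_comm.1 ham)
  · refine Measure.restrict_le_self.absolutelyContinuous ?_
    rwa [(measurePreserving_sub_right volume a).measure_preimage hK.measurableSet.nullMeasurableSet]

end Derivation

lemma tendsto_mul_measure_toReal_zero {X ι : Type*} [MeasurableSpace X] {m : Measure X}
    [IsFiniteMeasure m] {l : Filter ι} {u : ι → ℝ} (hu : Tendsto u l (𝓝 0)) (A : ι → Set X) :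
    Tendsto (fun i => u i * (m (A i)).toReal) l (𝓝 0) := by
  simp only [mul_comm (u _)]
  exact bdd_le_mul_tendsto_zero (.of_forall fun _ => ENNReal.toReal_nonneg)
    (.of_forall fun i => measureReal_mono (subset_univ (A i))) hu

/-- If `μ` is a finite complex Borel measure on `[0,1)` with
`t |μ|([0,1-t))` bounded as `t → 0⁺` and the derivation `D_μ f = (Xf) * μ` is weakly
compact on `L¹[0,1)`, then `μ` is absolutely continuous w.r.t. Lebesgue measure and
`t |μ|([0,1-t)) → 0` as `t → 0⁺`. -/
theorem weakly_compact_derivation_abs_continuous (μ : ComplexMeasure ℝ)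
    (hμc : ConcOn μ (Ico 0 1))
    (hμb : ∃ C δ : ℝ, 0 < δ ∧ ∀ t : ℝ, 0 < t → t < δ →
      t * (cTV μ (Ico 0 (1 - t))).toReal ≤ C)
    (D : Volterra →L[ℂ] Volterra) (hD : IsDmu μ D)
    (hw : IsCompact (closure
      (⇑(toWeakSpace ℂ Volterra) '' (⇑D '' Metric.closedBall 0 1)))) :
    (∀ E : Set ℝ, MeasurableSet E → volume E = 0 → μ E = 0) ∧
      Tendsto (fun t : ℝ => t * (cTV μ (Ico 0 (1 - t))).toReal)
        (nhdsWithin 0 (Ioi 0)) (nhds 0) := by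
  refine ⟨fun E hE hE0 => ?_, tendsto_mul_measure_toReal_zero
    (tendsto_id.mono_left nhdsWithin_le_nhds) _⟩
  rw [← hμc.apply_inter measurableSet_Ico hE]
  refine vectorMeasure_apply_eq_zero_of_forall_isCompact enorm_apply_le_cTV
    (hE.inter measurableSet_Ico) fun K hKE hK => ?_
  exact hD.apply_eq_zero_of_isCompact hμc hw hK (fun x hx => (hKE hx).2.2)
    (measure_mono_null (hKE.trans inter_subset_left) hE0)
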